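/- arXiv:1801.10298 — 2 statements merged into one kernel-verified Lean document; each statement's English description precedes it below -/
import Mathlib

section
/- Let h₁ be a harmonic polynomial on ℝ^p homogeneous of degree k, h₂ a harmonic polynomial on ℝ^q homogeneous of degree l, set κ₊ = k + p/2, κ₋ = l + q/2, let μ ∈ ℕ, and set λ = −κ₊ + κ₋ + 2μ. Then for every ν ∈ ℕ, at every point (x,y) with x ≠ 0 and y ≠ 0 (integer powers of ρ_y possibly negative), (X⁻)^ν ( h₁ h₂ ρ_y^μ ψ_{κ₊} ) = h₁ h₂ · Σ_{i=0}^{ν} C(ν,i) · ( ⟨−λ+ν−1⟩_i · ⟨μ⟩_{ν−i} · ⟨κ₋+μ−1⟩_{ν−i} / (κ₊)_i ) · ρ_x^i ρ_y^{μ−ν+i} ψ_{κ₊+i}, where C(ν,i) is the binomial coefficient, ⟨β⟩_n = β(β−1)⋯(β−n+1) is the falling factorial, and (β)_n = β(β+1)⋯(β+n−1) is the rising factorial. -/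
noncomputable section

/-- Points `(x, y) ∈ ℝ^p × ℝ^q`. -/
abbrev Pt (p q : ℕ) := (Fin p → ℝ) × (Fin q → ℝ)

/-- The partial derivative `∂_{x_i}` of a function on `ℝ^p × ℝ^q`. -/
def pdx (p q : ℕ) (i : Fin p) (f : Pt p q → ℂ) : Pt p q → ℂ :=
  fun z => fderiv ℝ f z ((Pi.single i 1 : Fin p → ℝ), (0 : Fin q → ℝ))

/-- The partial derivative `∂_{y_j}` of a function on `ℝ^p × ℝ^q`. -/
def pdy (p q : ℕ) (j : Fin q) (f : Pt p q → ℂ) : Pt p q → ℂ :=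
  fun z => fderiv ℝ f z ((0 : Fin p → ℝ), (Pi.single j 1 : Fin q → ℝ))

/-- `ρ_x = r_x²/2 = (Σ_i x_i²)/2`. -/
def rhox (p q : ℕ) (z : Pt p q) : ℝ := (∑ i, z.1 i ^ 2) / 2

/-- `ρ_y = r_y²/2 = (Σ_j y_j²)/2`. -/
def rhoy (p q : ℕ) (z : Pt p q) : ℝ := (∑ j, z.2 j ^ 2) / 2

/-- The operator `H = −E_x − p/2 + E_y + q/2`. -/
def HOp (p q : ℕ) (f : Pt p q → ℂ) : Pt p q → ℂ := fun z =>
  -(∑ i, ((z.1 i : ℝ) : ℂ) * pdx p q i f z) - ((p : ℂ) / 2) * f z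
    + (∑ j, ((z.2 j : ℝ) : ℂ) * pdy p q j f z) + ((q : ℂ) / 2) * f z

/-- The operator `X⁺ = −(1/2)(Δ_x + r_y²)`. -/
def XpOp (p q : ℕ) (f : Pt p q → ℂ) : Pt p q → ℂ := fun z =>
  -(1 / 2 : ℂ) * ((∑ i, pdx p q i (pdx p q i f) z) + (((∑ j, z.2 j ^ 2 : ℝ)) : ℂ) * f z)

/-- The operator `X⁻ = (1/2)(r_x² + Δ_y)`. -/
def XmOp (p q : ℕ) (f : Pt p q → ℂ) : Pt p q → ℂ := fun z =>
  (1 / 2 : ℂ) * ((((∑ i, z.1 i ^ 2 : ℝ)) : ℂ) * f z + ∑ j, pdy p q j (pdy p q j f) z)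

/-- Rising factorial `(α)ₙ = α(α+1)⋯(α+n−1)` for a complex number `α`. -/
def rising (α : ℂ) : ℕ → ℂ
  | 0 => 1
  | n + 1 => rising α n * (α + n)

/-- Falling factorial `⟨β⟩ₙ = β(β−1)⋯(β−n+1)` for a complex number `β`. -/
def falling (β : ℂ) : ℕ → ℂ
  | 0 => 1
  | n + 1 => falling β n * (β - n)

/-- `Ψ_α(u) = Σ_{n=0}^∞ ((−1)ⁿ/(n!·(α)ₙ))·uⁿ`. -/
def Psi (α : ℂ) (u : ℂ) : ℂ :=
  ∑' n : ℕ, ((-1) ^ n / ((n.factorial : ℂ) * rising α n)) * u ^ n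

/-- `ψ_α(x,y) = Ψ_α(ρ_x ρ_y)`. -/
def psiF (p q : ℕ) (α : ℂ) (z : Pt p q) : ℂ :=
  Psi α (((rhox p q z * rhoy p q z : ℝ)) : ℂ)

end


open Filter Topology

theorem rising_succ' (α : ℂ) (n : ℕ) : rising α (n+1) = α * rising (α+1) n := by
  induction n with
  | zero => simp [rising]
  | succ n ih =>
    rw [rising, ih]; conv_rhs => rw [rising]
    push_cast; ring

theorem falling_succ' (α : ℂ) (n : ℕ) : falling α (n+1) = α * falling (α-1) n := by
  induction n with
  | zero => simp [falling]
  | succ n ih =>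
    rw [falling, ih]; conv_rhs => rw [falling]
    push_cast; ring

theorem norm_add_ge {α : ℂ} (h : 1/2 ≤ α.re) (n : ℕ) : 1/2 ≤ ‖α + n‖ := by
  have h1 := Complex.re_le_norm (α + n)
  have : (α + n).re = α.re + n := by simp
  have h2 : (0:ℝ) ≤ n := by positivity
  linarith

theorem norm_rising_ge {α : ℂ} (h : 1/2 ≤ α.re) (n : ℕ) : (1/2)^n ≤ ‖rising α n‖ := by
  induction n with
  | zero => simp [rising]
  | succ n ih =>
    rw [rising, norm_mul, pow_succ]
    exact mul_le_mul ih (norm_add_ge h n) (by norm_num) (norm_nonneg _)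

theorem rising_ne {α : ℂ} (h : 1/2 ≤ α.re) (n : ℕ) : rising α n ≠ 0 := by
  have := norm_rising_ge h n
  intro h0
  rw [h0, norm_zero] at this
  have : (0:ℝ) < (1/2)^n := by positivity
  linarith

noncomputable def cf (α : ℂ) (n : ℕ) : ℂ := ((-1) ^ n / ((n.factorial : ℂ) * rising α n))

theorem norm_cf_le {α : ℂ} (h : 1/2 ≤ α.re) (n : ℕ) : ‖cf α n‖ ≤ 2^n / n.factorial := by
  have h1 := norm_rising_ge h n
  have h3 : (0:ℝ) < (1/2)^n := by positivity
  have h4 : (0:ℝ) < n.factorial := by positivity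
  rw [cf, norm_div, norm_mul]
  simp only [norm_pow, norm_neg, norm_one, one_pow, Complex.norm_natCast]
  rw [div_le_div_iff₀ (mul_pos h4 (h3.trans_le h1)) h4]
  have : (2:ℝ)^n * (1/2)^n = 1 := by rw [← mul_pow]; norm_num
  nlinarith [mul_le_mul_of_nonneg_left h1 (show (0:ℝ) ≤ 2^n * n.factorial by positivity)]

theorem summable_cf {α : ℂ} (h : 1/2 ≤ α.re) (u : ℂ) : Summable (fun n => cf α n * u^n) := by
  refine Summable.of_norm_bounded (Real.summable_pow_div_factorial (2 * ‖u‖)) fun n => ?_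
  rw [norm_mul, norm_pow, mul_pow]
  have := mul_le_mul_of_nonneg_right (norm_cf_le h n) (show 0 ≤ ‖u‖^n by positivity)
  refine this.trans (le_of_eq ?_)
  ring

theorem Psi_eq (α u : ℂ) : Psi α u = ∑' n, cf α n * u^n := rfl

theorem cf_succ {α : ℂ} (h : 1/2 ≤ α.re) (n : ℕ) :
    cf α (n+1) * ((n:ℂ)+1) = -(1/α) * cf (α+1) n := by
  have h0 : α ≠ 0 := by
    rintro rfl; norm_num at h
  have h1 : rising (α+1) n ≠ 0 := rising_ne (by simp; linarith) n
  have h2 : (n.factorial : ℂ) ≠ 0 := by exact_mod_cast n.factorial_ne_zero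
  have h3 : (n:ℂ)+1 ≠ 0 := by exact_mod_cast n.succ_ne_zero
  rw [cf, cf, rising_succ', Nat.factorial_succ]
  push_cast
  field_simp
  ring

theorem hasDerivAt_Psi {α : ℂ} (h : 1/2 ≤ α.re) (u : ℂ) :
    HasDerivAt (Psi α) (-(1/α) * Psi (α+1) u) u := by
  set R : ℝ := ‖u‖ + 1 with hR
  have hR1 : 1 ≤ R := by have := norm_nonneg u; linarith
  have key : HasDerivAt (fun z => ∑' n, cf α n * z^n) (∑' n, cf α n * ((n:ℂ) * u^(n-1))) u := by
    refine hasDerivAt_tsum_of_isPreconnected (t := Metric.ball (0:ℂ) R) (y₀ := u)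
      (g' := fun n z => cf α n * ((n:ℂ) * z^(n-1)))
      (Real.summable_pow_div_factorial (4*R)) Metric.isOpen_ball
      (convex_ball _ _).isPreconnected ?_ ?_ ?_ (summable_cf h u) ?_
    · intro n y _
      exact (hasDerivAt_pow n y).const_mul _
    · intro n y hy
      have hy' : ‖y‖ ≤ R := by simpa using (mem_ball_zero_iff.1 hy).le
      rw [norm_mul, norm_mul, norm_pow, Complex.norm_natCast]
      have e1 : ‖y‖^(n-1) ≤ R^n :=
        (pow_le_pow_left₀ (norm_nonneg _) hy' _).trans (pow_le_pow_right₀ hR1 (Nat.sub_le _ _))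
      have e2 : (n:ℝ) ≤ 2^n := by exact_mod_cast (Nat.lt_two_pow_self (n := n)).le
      calc ‖cf α n‖ * ((n:ℝ) * ‖y‖^(n-1)) ≤ (2^n / n.factorial) * (2^n * R^n) := by
            gcongr
            exact norm_cf_le h n
        _ = _ := by
            rw [show (4:ℝ) * R = 2*2*R by ring, mul_pow, mul_pow]; ring
    · simp [hR]
    · simp [hR]
  have e : (∑' n, cf α n * ((n:ℂ) * u^(n-1))) = -(1/α) * Psi (α+1) u := by
    rw [Psi_eq, ← tsum_mul_left]
    have : ∀ n : ℕ, n ∉ Set.range Nat.succ → cf α n * ((n:ℂ) * u^(n-1)) = 0 := by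
      intro n hn
      cases n with
      | zero => simp
      | succ n => exact absurd ⟨n, rfl⟩ hn
    rw [← (Nat.succ_injective).tsum_eq (f := fun n : ℕ => cf α n * ((n:ℂ) * u^(n-1)))]
    · refine tsum_congr fun n => ?_
      have := cf_succ h n
      simp only [Nat.succ_eq_add_one, Nat.add_sub_cancel]
      push_cast
      linear_combination u^n * this
    · intro n hn
      by_contra h'
      exact hn (this n h')
  rw [← e]
  exact key

theorem Psi_ode {α : ℂ} (h : 1/2 ≤ α.re) (u : ℂ) :
    Psi α u - Psi (α+1) u + u / (α * (α+1)) * Psi (α+1+1) u = 0 := by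
  have h0 : α ≠ 0 := by
    rintro rfl; norm_num at h
  have g1 : 1/2 ≤ (α+1).re := by simp; linarith
  have g2 : 1/2 ≤ (α+1+1).re := by simp; linarith
  have h1 : α + 1 ≠ 0 := by
    intro h; rw [h] at g1; norm_num at g1
  have s : Psi α u - Psi (α+1) u = ∑' n, (cf α n - cf (α+1) n) * u^n := by
    rw [Psi_eq, Psi_eq, ← (summable_cf h u).tsum_sub (summable_cf g1 u)]
    simp only [sub_mul]
  have ss : Summable (fun n => (cf α n - cf (α+1) n) * u^n) := by
    simpa only [sub_mul] using (summable_cf h u).sub (summable_cf g1 u)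
  rw [s, ss.tsum_eq_zero_add, Psi_eq, ← tsum_mul_left]
  have : ∀ n, (cf α (n+1) - cf (α+1) (n+1)) * u^(n+1)
      = - (u / (α * (α+1)) * (cf (α+1+1) n * u^n)) := by
    intro n
    have r2 : rising (α+1+1) n ≠ 0 := rising_ne g2 n
    have r1 : rising (α+1) n ≠ 0 := rising_ne g1 n
    have h2 : (n.factorial : ℂ) ≠ 0 := by exact_mod_cast n.factorial_ne_zero
    have h3 : (n:ℂ)+1 ≠ 0 := by exact_mod_cast n.succ_ne_zero
    have e : rising (α+1) n * (α+1+n) = (α+1) * rising (α+1+1) n := by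
      rw [← rising_succ', rising]
    have h5 : α + 1 + n ≠ 0 := by
      intro h; rw [h, mul_zero] at e
      exact mul_ne_zero h1 r2 e.symm
    have e' : rising (α+1) n = (α+1) * rising (α+1+1) n / (α+1+n) := by
      rw [← e]; field_simp
    have a1 : cf α (n+1) = (-1)^(n+1) / (((n:ℂ)+1) * n.factorial * (α * ((α+1) * rising (α+1+1) n / (α+1+n)))) := by
      rw [cf, rising_succ', e', Nat.factorial_succ]; push_cast; rfl
    have a2 : cf (α+1) (n+1) = (-1)^(n+1) / (((n:ℂ)+1) * n.factorial * ((α+1) * rising (α+1+1) n)) := by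
      rw [cf, rising_succ', Nat.factorial_succ]; push_cast; rfl
    rw [a1, a2, cf]
    field_simp
    ring
  rw [tsum_congr this, tsum_neg]
  simp [cf, rising]

theorem evalC_deriv {p q : ℕ} (h : MvPolynomial (Fin q) ℝ) (z : Pt p q) :
    DifferentiableAt ℝ (fun z : Pt p q => ((MvPolynomial.eval z.2 h : ℝ) : ℂ)) z ∧
    ∀ j, pdy p q j (fun z : Pt p q => ((MvPolynomial.eval z.2 h : ℝ) : ℂ)) z =
      ((MvPolynomial.eval z.2 (MvPolynomial.pderiv j h) : ℝ) : ℂ) := by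
  induction h using MvPolynomial.induction_on with
  | C a => simp [pdy]
  | add f g hf hg =>
    simp only [map_add, Complex.ofReal_add]
    refine ⟨hf.1.add hg.1, fun j => ?_⟩
    rw [← hf.2 j, ← hg.2 j]
    simp only [pdy]
    rw [fderiv_fun_add hf.1 hg.1]; rfl
  | mul_X f i hf =>
    simp only [map_mul, Complex.ofReal_mul, MvPolynomial.eval_X]
    have hx : HasFDerivAt (fun z : Pt p q => ((z.2 i : ℝ) : ℂ))
        (Complex.ofRealCLM.comp ((ContinuousLinearMap.proj (R := ℝ) (φ := fun _ : Fin q => ℝ) i).comp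
          (ContinuousLinearMap.snd ℝ (Fin p → ℝ) (Fin q → ℝ)))) z := by
      exact (Complex.ofRealCLM.comp ((ContinuousLinearMap.proj (R := ℝ)
        (φ := fun _ : Fin q => ℝ) i).comp
          (ContinuousLinearMap.snd ℝ (Fin p → ℝ) (Fin q → ℝ)))).hasFDerivAt (x := z)
    refine ⟨hf.1.mul hx.differentiableAt, fun j => ?_⟩
    have := hf.2 j
    simp only [pdy] at this ⊢
    rw [fderiv_fun_mul hf.1 hx.differentiableAt, hx.fderiv]
    simp only [add_apply, smul_apply, this]
    simp only [MvPolynomial.pderiv_mul, MvPolynomial.pderiv_X, map_add, map_mul]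
    by_cases hij : i = j
    · subst hij
      simp
      ring
    · have hji : ¬ j = i := fun h => hij h.symm
      simp [Pi.single_apply, hij, hji]
      ring

/-- `∂_j G = y_j G'` off `y = 0`. -/
def RadDer (p q : ℕ) (G G' : Pt p q → ℂ) : Prop :=
  ∀ z : Pt p q, z.2 ≠ 0 → DifferentiableAt ℝ G z ∧
    ∀ j, pdy p q j G z = ((z.2 j : ℝ) : ℂ) * G' z

theorem RadDer.mul {p q : ℕ} {F F' G G' : Pt p q → ℂ} (hF : RadDer p q F F')
    (hG : RadDer p q G G') :
    RadDer p q (fun z => F z * G z) (fun z => F' z * G z + F z * G' z) := by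
  intro z hz
  obtain ⟨f1, f2⟩ := hF z hz
  obtain ⟨g1, g2⟩ := hG z hz
  refine ⟨f1.mul g1, fun j => ?_⟩
  have f3 := f2 j
  have g3 := g2 j
  simp only [pdy] at f3 g3 ⊢
  rw [fderiv_fun_mul f1 g1]
  simp only [add_apply, smul_apply, f3, g3, smul_eq_mul]
  ring

theorem RadDer.sum {p q : ℕ} {ι : Type*} (s : Finset ι) {G G' : ι → Pt p q → ℂ}
    (hG : ∀ i ∈ s, RadDer p q (G i) (G' i)) :
    RadDer p q (fun z => ∑ i ∈ s, G i z) (fun z => ∑ i ∈ s, G' i z) := by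
  intro z hz
  refine ⟨DifferentiableAt.fun_sum fun i hi => (hG i hi z hz).1, fun j => ?_⟩
  simp only [pdy]
  rw [fderiv_fun_sum fun i hi => (hG i hi z hz).1]
  rw [sum_apply, Finset.mul_sum]
  exact Finset.sum_congr rfl fun i hi => (hG i hi z hz).2 j

theorem RadDer.congr {p q : ℕ} {G G' H : Pt p q → ℂ} (h : RadDer p q G G')
    (e : ∀ z : Pt p q, z.2 ≠ 0 → G' z = H z) : RadDer p q G H := by
  intro z hz
  refine ⟨(h z hz).1, fun j => ?_⟩
  rw [← e z hz]; exact (h z hz).2 j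

theorem RadDer.fst {p q : ℕ} (φ : (Fin p → ℝ) → ℂ) (hφ : Differentiable ℝ φ) :
    RadDer p q (fun z => φ z.1) (fun _ => 0) := by
  intro z hz
  have h : HasFDerivAt (fun z : Pt p q => φ z.1)
      ((fderiv ℝ φ z.1).comp (ContinuousLinearMap.fst ℝ (Fin p → ℝ) (Fin q → ℝ))) z :=
    (hφ z.1).hasFDerivAt.comp z hasFDerivAt_fst
  refine ⟨h.differentiableAt, fun j => ?_⟩
  simp only [pdy]
  rw [h.fderiv]
  simp

theorem RadDer.of_rhoy {p q : ℕ} : RadDer p q (fun z => ((rhoy p q z : ℝ) : ℂ)) (fun _ => 1) := by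
  intro z hz
  have h := evalC_deriv (p := p) (∑ j : Fin q, MvPolynomial.C (1/2 : ℝ) * MvPolynomial.X j ^ 2) z
  have e : (fun z : Pt p q => ((rhoy p q z : ℝ) : ℂ)) = (fun z : Pt p q =>
      ((MvPolynomial.eval z.2 (∑ j : Fin q, MvPolynomial.C (1/2 : ℝ) * MvPolynomial.X j ^ 2) : ℝ) : ℂ)) := by
    funext z
    congr 1
    simp only [rhoy, map_sum, map_mul, map_pow, MvPolynomial.eval_C, MvPolynomial.eval_X]
    rw [← Finset.mul_sum]; ring
  rw [e]
  refine ⟨h.1, fun j => ?_⟩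
  rw [h.2 j]
  simp only [map_sum, MvPolynomial.pderiv_C_mul, MvPolynomial.pderiv_pow, MvPolynomial.pderiv_X]
  rw [Finset.sum_eq_single j]
  · simp [MvPolynomial.smul_eval]
  · intro i _ hij
    simp [Pi.single_apply, hij]
  · simp

theorem RadDer.comp {p q : ℕ} {G G' : Pt p q → ℂ} (hG : RadDer p q G G') (φ φ' : ℂ → ℂ)
    (h : ∀ z : Pt p q, z.2 ≠ 0 → HasDerivAt φ (φ' (G z)) (G z)) :
    RadDer p q (fun z => φ (G z)) (fun z => φ' (G z) * G' z) := by
  intro z hz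
  obtain ⟨g1, g2⟩ := hG z hz
  have hh : HasFDerivAt (fun z => φ (G z)) (φ' (G z) • fderiv ℝ G z) z :=
    (h z hz).comp_hasFDerivAt z g1.hasFDerivAt
  refine ⟨hh.differentiableAt, fun j => ?_⟩
  have g3 := g2 j
  simp only [pdy] at g3 ⊢
  rw [hh.fderiv, smul_apply, g3, smul_eq_mul]
  ring

theorem rhoy_ne {p q : ℕ} {z : Pt p q} (hz : z.2 ≠ 0) : ((rhoy p q z : ℝ) : ℂ) ≠ 0 := by
  have : rhoy p q z ≠ 0 := by
    intro h
    apply hz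
    simp only [rhoy] at h
    have h2 : ∑ j, z.2 j ^ 2 = 0 := by linarith
    rw [Finset.sum_eq_zero_iff_of_nonneg (fun i _ => sq_nonneg _)] at h2
    funext j
    simpa using h2 j (Finset.mem_univ j)
  exact_mod_cast this

theorem RadDer.zpow {p q : ℕ} (s : ℤ) : RadDer p q (fun z => ((rhoy p q z : ℝ) : ℂ) ^ s)
    (fun z => s * ((rhoy p q z : ℝ) : ℂ) ^ (s-1)) := by
  refine (RadDer.comp RadDer.of_rhoy (fun w => w ^ s) (fun w => s * w ^ (s-1)) ?_).congr ?_
  · intro z hz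
    exact hasDerivAt_zpow s _ (Or.inl (rhoy_ne hz))
  · intro z hz; simp

theorem diff_rhox {p : ℕ} : Differentiable ℝ (fun x : Fin p → ℝ => (((∑ i, x i ^ 2) / 2 : ℝ) : ℂ)) := by
  intro x
  have h : DifferentiableAt ℝ (fun x : Fin p → ℝ => (∑ i, x i ^ 2) / 2) x := by
    simp only [div_eq_mul_inv]
    fun_prop
  exact Complex.ofRealCLM.differentiableAt.comp x h

theorem RadDer.of_rhox {p q : ℕ} : RadDer p q (fun z => ((rhox p q z : ℝ) : ℂ)) (fun _ => 0) :=
  RadDer.fst _ diff_rhox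

theorem RadDer.of_rhox_pow {p q : ℕ} (i : ℕ) :
    RadDer p q (fun z => ((rhox p q z : ℝ) : ℂ) ^ i) (fun _ => 0) :=
  RadDer.fst (fun x : Fin p → ℝ => (((∑ i, x i ^ 2) / 2 : ℝ) : ℂ) ^ i) (diff_rhox.pow i)

theorem RadDer.const {p q : ℕ} (c : ℂ) : RadDer p q (fun _ => c) (fun _ => 0) :=
  RadDer.fst (fun _ => c) (differentiable_const c)

theorem RadDer.psi {p q : ℕ} {α : ℂ} (h : 1/2 ≤ α.re) :
    RadDer p q (fun z => psiF p q α z)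
      (fun z => -(1/α) * ((rhox p q z : ℝ) : ℂ) * psiF p q (α+1) z) := by
  have := (RadDer.comp (RadDer.mul RadDer.of_rhox RadDer.of_rhoy) (Psi α) (fun u => -(1/α) * Psi (α+1) u)
    (fun z _ => hasDerivAt_Psi h _)).congr (p := p) (q := q)
    (H := fun z => -(1/α) * ((rhox p q z : ℝ) : ℂ) * psiF p q (α+1) z) ?_
  · simpa [psiF] using this
  · intro z _
    simp [psiF]
    ring

theorem isOpen_snd {p q : ℕ} : IsOpen {z : Pt p q | z.2 ≠ 0} :=
  isOpen_ne_fun continuous_snd continuous_const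

theorem pdy_congr {p q : ℕ} {j : Fin q} {F G : Pt p q → ℂ} (h : ∀ z : Pt p q, z.2 ≠ 0 → F z = G z)
    (z : Pt p q) (hz : z.2 ≠ 0) : pdy p q j F z = pdy p q j G z := by
  have : F =ᶠ[𝓝 z] G := by
    filter_upwards [isOpen_snd.mem_nhds hz] with w hw using h w hw
  simp only [pdy, this.fderiv_eq]

theorem XmOp_congr {p q : ℕ} {F G : Pt p q → ℂ} (h : ∀ z : Pt p q, z.2 ≠ 0 → F z = G z)
    (z : Pt p q) (hz : z.2 ≠ 0) : XmOp p q F z = XmOp p q G z := by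
  simp only [XmOp, h z hz]
  congr 2
  exact Finset.sum_congr rfl fun j _ =>
    pdy_congr (fun w hw => pdy_congr h w hw) z hz

theorem pdy_mul {p q : ℕ} {j : Fin q} {F G : Pt p q → ℂ} {z : Pt p q} (hF : DifferentiableAt ℝ F z)
    (hG : DifferentiableAt ℝ G z) :
    pdy p q j (fun z => F z * G z) z = pdy p q j F z * G z + F z * pdy p q j G z := by
  simp only [pdy]
  rw [fderiv_fun_mul hF hG]
  simp only [add_apply, smul_apply, smul_eq_mul]
  ring

theorem pdy_add {p q : ℕ} {j : Fin q} {F G : Pt p q → ℂ} {z : Pt p q} (hF : DifferentiableAt ℝ F z)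
    (hG : DifferentiableAt ℝ G z) :
    pdy p q j (fun z => F z + G z) z = pdy p q j F z + pdy p q j G z := by
  simp only [pdy]
  rw [fderiv_fun_add hF hG]
  simp only [add_apply]

theorem XmOp_rad {p q l : ℕ} (h : MvPolynomial (Fin q) ℝ) (hhom : h.IsHomogeneous l)
    (hharm : ∑ j : Fin q, MvPolynomial.pderiv j (MvPolynomial.pderiv j h) = 0)
    {G G' G'' : Pt p q → ℂ} (hG : RadDer p q G G') (hG' : RadDer p q G' G'')
    (z : Pt p q) (hz : z.2 ≠ 0) :
    XmOp p q (fun z => ((MvPolynomial.eval z.2 h : ℝ) : ℂ) * G z) z =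
      ((MvPolynomial.eval z.2 h : ℝ) : ℂ) * (((rhox p q z : ℝ) : ℂ) * G z
        + ((l:ℂ) + (q:ℂ)/2) * G' z + ((rhoy p q z : ℝ) : ℂ) * G'' z) := by
  have d1 : ∀ j, ∀ z : Pt p q, z.2 ≠ 0 →
      pdy p q j (fun z => ((MvPolynomial.eval z.2 h : ℝ) : ℂ) * G z) z =
      ((MvPolynomial.eval z.2 (MvPolynomial.pderiv j h) : ℝ) : ℂ) * G z +
      ((MvPolynomial.eval z.2 (h * MvPolynomial.X j) : ℝ) : ℂ) * G' z := by
    intro j z hz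
    rw [pdy_mul (evalC_deriv h z).1 (hG z hz).1, (evalC_deriv h z).2 j, (hG z hz).2 j]
    simp only [map_mul, MvPolynomial.eval_X, Complex.ofReal_mul]
    ring
  have d2 : ∀ j, pdy p q j (pdy p q j (fun z => ((MvPolynomial.eval z.2 h : ℝ) : ℂ) * G z)) z =
      ((MvPolynomial.eval z.2 (MvPolynomial.pderiv j (MvPolynomial.pderiv j h)) : ℝ) : ℂ) * G z
      + 2 * ((MvPolynomial.eval z.2 (MvPolynomial.X j * MvPolynomial.pderiv j h) : ℝ) : ℂ) * G' z
      + ((MvPolynomial.eval z.2 h : ℝ) : ℂ) * G' z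
      + ((MvPolynomial.eval z.2 h : ℝ) : ℂ) * G'' z * ((z.2 j ^ 2 : ℝ) : ℂ) := by
    intro j
    rw [pdy_congr (d1 j) z hz]
    rw [pdy_add ((evalC_deriv _ z).1.fun_mul (hG z hz).1) ((evalC_deriv _ z).1.fun_mul (hG' z hz).1),
      pdy_mul (evalC_deriv _ z).1 (hG z hz).1, pdy_mul (evalC_deriv _ z).1 (hG' z hz).1,
      (evalC_deriv _ z).2 j, (evalC_deriv _ z).2 j, (hG z hz).2 j, (hG' z hz).2 j]
    simp only [MvPolynomial.pderiv_mul, MvPolynomial.pderiv_X_self, map_add, map_mul, map_one,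
      MvPolynomial.eval_X]
    push_cast
    ring
  have s1 := congrArg (fun P => ((MvPolynomial.eval z.2 P : ℝ) : ℂ)) hharm
  have s2 := congrArg (fun P => ((MvPolynomial.eval z.2 P : ℝ) : ℂ)) hhom.sum_X_mul_pderiv
  simp only [map_sum, Complex.ofReal_sum, map_zero, Complex.ofReal_zero, map_nsmul] at s1 s2
  simp only [XmOp, d2, Finset.sum_add_distrib, ← Finset.sum_mul, ← Finset.mul_sum, s1, s2]
  simp only [rhox, rhoy, Finset.sum_const, Finset.card_univ, Fintype.card_fin]
  push_cast
  simp only [nsmul_eq_mul]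
  push_cast
  ring

theorem diff_eval {p : ℕ} (h : MvPolynomial (Fin p) ℝ) :
    Differentiable ℝ (fun x : Fin p → ℝ => ((MvPolynomial.eval x h : ℝ) : ℂ)) := by
  intro x
  have := (evalC_deriv (p := 0) h ((0 : Fin 0 → ℝ), x)).1
  have h2 : DifferentiableAt ℝ (fun x : Fin p → ℝ => (((0 : Fin 0 → ℝ), x) : Pt 0 p)) x := by
    fun_prop
  exact DifferentiableAt.comp x this h2

noncomputable def TT (p q : ℕ) (h : MvPolynomial (Fin p) ℝ) (i : ℕ) (s : ℤ) (α : ℂ) (z : Pt p q) : ℂ :=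
  ((MvPolynomial.eval z.1 h : ℝ) : ℂ) * ((rhox p q z : ℝ) : ℂ) ^ i *
    (((rhoy p q z : ℝ) : ℂ) ^ s * psiF p q α z)

theorem RadDer.TT {p q : ℕ} (h : MvPolynomial (Fin p) ℝ) (i : ℕ) (s : ℤ) {α : ℂ}
    (hα : 1/2 ≤ α.re) :
    RadDer p q (TT p q h i s α)
      (fun z => (s:ℂ) * TT p q h i (s-1) α z + (-(1/α)) * TT p q h (i+1) s (α+1) z) := by
  refine (((RadDer.fst _ (diff_eval h)).mul (RadDer.of_rhox_pow i)).mul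
    ((RadDer.zpow s).mul (RadDer.psi hα))).congr ?_
  intro z hz
  simp only [_root_.TT]
  ring

theorem RadDer.cmul {p q : ℕ} (c : ℂ) {G G' : Pt p q → ℂ} (h : RadDer p q G G') :
    RadDer p q (fun z => c * G z) (fun z => c * G' z) :=
  ((RadDer.const c).mul h).congr fun z _ => by simp

theorem RadDer.add {p q : ℕ} {F F' G G' : Pt p q → ℂ} (hF : RadDer p q F F')
    (hG : RadDer p q G G') :
    RadDer p q (fun z => F z + G z) (fun z => F' z + G' z) := by
  intro z hz
  refine ⟨(hF z hz).1.fun_add (hG z hz).1, fun j => ?_⟩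
  rw [pdy_add (hF z hz).1 (hG z hz).1, (hF z hz).2, (hG z hz).2]
  ring

theorem D_TT {p q : ℕ} (h : MvPolynomial (Fin p) ℝ) (i : ℕ) (s : ℤ) {α : ℂ} (κ : ℂ)
    (hα : 1/2 ≤ α.re) (z : Pt p q) (hz : z.2 ≠ 0) :
    ((rhox p q z : ℝ) : ℂ) * TT p q h i s α z
      + κ * ((s:ℂ) * TT p q h i (s-1) α z + (-(1/α)) * TT p q h (i+1) s (α+1) z)
      + ((rhoy p q z : ℝ) : ℂ) *
        ((s:ℂ) * (((s-1 : ℤ):ℂ) * TT p q h i (s-1-1) α z + (-(1/α)) * TT p q h (i+1) (s-1) (α+1) z)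
        + (-(1/α)) * ((s:ℂ) * TT p q h (i+1) (s-1) (α+1) z
          + (-(1/(α+1))) * TT p q h (i+1+1) s (α+1+1) z))
    = (s:ℂ) * (s - 1 + κ) * TT p q h i (s-1) α z
      + (α - 2*s - κ)/α * TT p q h (i+1) s (α+1) z := by
  have h0 : α ≠ 0 := by
    rintro rfl; norm_num at hα
  have g1 : 1/2 ≤ (α+1).re := by simp; linarith
  have h1 : α + 1 ≠ 0 := by
    intro h; rw [h] at g1; norm_num at g1
  have ht := rhoy_ne hz
  have ode := Psi_ode hα (((rhox p q z * rhoy p q z : ℝ)) : ℂ)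
  simp only [TT, psiF]
  have e1 : ((rhoy p q z : ℝ) : ℂ) ^ s = ((rhoy p q z : ℝ) : ℂ) ^ (s-1-1) * ((rhoy p q z : ℝ) : ℂ)^2 := by
    rw [← zpow_natCast, ← zpow_add₀ ht]; congr 1; push_cast; ring
  have e2 : ((rhoy p q z : ℝ) : ℂ) ^ (s-1) = ((rhoy p q z : ℝ) : ℂ) ^ (s-1-1) * ((rhoy p q z : ℝ) : ℂ) := by
    rw [← zpow_add_one₀ ht]; congr 1; ring
  rw [e1, e2]
  generalize ((rhoy p q z : ℝ) : ℂ) ^ (s-1-1) = w at *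
  set P0 := Psi α (((rhox p q z * rhoy p q z : ℝ)) : ℂ)
  set P1 := Psi (α+1) (((rhox p q z * rhoy p q z : ℝ)) : ℂ)
  set P2 := Psi (α+1+1) (((rhox p q z * rhoy p q z : ℝ)) : ℂ)
  push_cast at ode ⊢
  set a := ((rhox p q z : ℝ) : ℂ)
  set t := ((rhoy p q z : ℝ) : ℂ)
  set E := ((MvPolynomial.eval z.1 h : ℝ) : ℂ)
  field_simp at ode ⊢
  linear_combination (E * a^i * w * t * a) * ode

noncomputable def CC (κp κm lam : ℂ) (μ ν i : ℕ) : ℂ := (ν.choose i : ℂ) *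
            (falling (-lam + (ν : ℂ) - 1) i * falling (μ : ℂ) (ν - i) *
                falling (κm + (μ : ℂ) - 1) (ν - i) / rising κp i)

theorem CC_zero (κp κm lam : ℂ) (μ ν : ℕ) : CC κp κm lam μ (ν+1) 0 =
    CC κp κm lam μ ν 0 * (((μ:ℂ) - ν) * ((μ:ℂ) - ν - 1 + κm)) := by
  simp only [CC, falling, rising, Nat.sub_zero, Nat.choose_zero_right]
  ring

theorem choose_id (ν i : ℕ) (hi : i ≤ ν) :
    ((i:ℂ)+1) * (ν.choose (i+1) : ℂ) = ((ν:ℂ) - i) * (ν.choose i : ℂ) := by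
  have := Nat.choose_succ_right_eq ν i
  have h2 : (((ν.choose (i+1) * (i+1) : ℕ)) : ℂ) = ((ν.choose i * (ν - i) : ℕ) : ℂ) := by rw [this]
  push_cast [Nat.cast_sub hi] at h2
  linear_combination h2

theorem CC_succ {κp : ℂ} (κm lam : ℂ) (μ ν i : ℕ) (hκ : 1/2 ≤ κp.re) (hi : i ≤ ν) :
    CC κp κm lam μ (ν+1) (i+1) =
    CC κp κm lam μ ν (i+1) * (((μ:ℂ) - ν + (i+1)) * ((μ:ℂ) - ν + (i+1) - 1 + κm))
    + CC κp κm lam μ ν i * ((-lam + 2*ν - i)/(κp + i)) := by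
  have hr := rising_ne hκ i
  have hr' : κp + i ≠ 0 := by
    have := rising_ne hκ (i+1)
    rw [rising] at this
    exact right_ne_zero_of_mul this
  have hc := choose_id ν i hi
  have f0 : falling (-lam + ((ν+1:ℕ):ℂ) - 1) (i+1) = (-lam + ν) * falling (-lam + ν - 1) i := by
    rw [show -lam + ((ν+1:ℕ):ℂ) - 1 = -lam + ν by push_cast; ring, falling_succ']
  obtain rfl | hlt := hi.eq_or_lt
  · simp only [CC, f0, Nat.choose_self, Nat.choose_succ_self, Nat.sub_self]
    simp only [rising, falling]
    push_cast
    field_simp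
    ring
  · obtain ⟨m, rfl⟩ : ∃ m, ν = i + 1 + m := ⟨ν - (i+1), by omega⟩
    have s1 : i + 1 + m + 1 - (i+1) = m + 1 := by omega
    have s2 : i + 1 + m - (i+1) = m := by omega
    have s3 : i + 1 + m - i = m + 1 := by omega
    simp only [CC, f0, s1, s2, s3, Nat.choose_succ_succ (i+1+m) i, Nat.succ_eq_add_one]
    simp only [rising, falling]
    push_cast at hc ⊢
    field_simp
    generalize falling (-lam + (i+1+m) - 1) i = A
    generalize falling (μ:ℂ) m = B
    generalize falling (κm + μ - 1) m = C
    linear_combination (A * B * C * ((μ:ℂ) - m) * (κm + μ - 1 - m)) * hc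

theorem key_sum (κp κm lam : ℂ) (μ ν : ℕ) (hκ : 1/2 ≤ κp.re) (T : ℕ → ℂ) :
    ∑ i ∈ Finset.range (ν+1), CC κp κm lam μ ν i *
      ((((μ:ℂ) - ν + i) * ((μ:ℂ) - ν + i - 1 + κm)) * T i + (-lam + 2*ν - i)/(κp + i) * T (i+1))
    = ∑ i ∈ Finset.range (ν+1+1), CC κp κm lam μ (ν+1) i * T i := by
  rw [Finset.sum_range_succ' (fun i => CC κp κm lam μ (ν+1) i * T i), CC_zero]
  have e : ∀ i ∈ Finset.range (ν+1), CC κp κm lam μ (ν+1) (i+1) * T (i+1) =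
      CC κp κm lam μ ν (i+1) * (((μ:ℂ) - ν + ((i+1:ℕ):ℂ)) * ((μ:ℂ) - ν + ((i+1:ℕ):ℂ) - 1 + κm)) * T (i+1)
      + CC κp κm lam μ ν i * ((-lam + 2*ν - i)/(κp + i)) * T (i+1) := by
    intro i hi
    rw [CC_succ κm lam μ ν i hκ (by simp at hi; omega)]
    push_cast
    ring
  rw [Finset.sum_congr rfl e, Finset.sum_add_distrib]
  have e2 := Finset.sum_range_succ' (fun i : ℕ =>
    CC κp κm lam μ ν i * (((μ:ℂ) - ν + i) * ((μ:ℂ) - ν + i - 1 + κm)) * T i) (ν+1)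
  have e3 := Finset.sum_range_succ (fun i : ℕ =>
    CC κp κm lam μ ν i * (((μ:ℂ) - ν + i) * ((μ:ℂ) - ν + i - 1 + κm)) * T i) (ν+1)
  have e4 : CC κp κm lam μ ν (ν+1) = 0 := by simp [CC]
  rw [e4] at e3
  have e5 : ∑ i ∈ Finset.range (ν+1), CC κp κm lam μ ν i *
      ((((μ:ℂ) - ν + i) * ((μ:ℂ) - ν + i - 1 + κm)) * T i + (-lam + 2*ν - i)/(κp + i) * T (i+1))
    = ∑ i ∈ Finset.range (ν+1), CC κp κm lam μ ν i * (((μ:ℂ) - ν + i) * ((μ:ℂ) - ν + i - 1 + κm)) * T i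
    + ∑ i ∈ Finset.range (ν+1), CC κp κm lam μ ν i * ((-lam + 2*ν - i)/(κp + i)) * T (i+1) := by
    rw [← Finset.sum_add_distrib]
    exact Finset.sum_congr rfl fun i _ => by ring
  rw [e5]
  simp only [Nat.cast_zero, add_zero] at e2
  linear_combination e2 - e3

theorem main_aux {p q l : ℕ} (h₁ : MvPolynomial (Fin p) ℝ) (h₂ : MvPolynomial (Fin q) ℝ)
    (hhom₂ : h₂.IsHomogeneous l)
    (hharm₂ : ∑ j : Fin q, MvPolynomial.pderiv j (MvPolynomial.pderiv j h₂) = 0)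
    (κp κm : ℂ) (hκ : 1/2 ≤ κp.re) (hκm : κm = (l : ℂ) + (q : ℂ) / 2)
    (μ : ℕ) (lam : ℂ) (hlam : lam = -κp + κm + 2 * (μ : ℂ))
    (f : Pt p q → ℂ)
    (hf : ∀ z, f z = ((MvPolynomial.eval z.2 h₂ : ℝ) : ℂ) * TT p q h₁ 0 μ κp z) (ν : ℕ) :
    ∀ z : Pt p q, z.2 ≠ 0 → (XmOp p q)^[ν] f z = ((MvPolynomial.eval z.2 h₂ : ℝ) : ℂ) *
      ∑ i ∈ Finset.range (ν+1), CC κp κm lam μ ν i *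
        TT p q h₁ i ((μ:ℤ) - ν + i) (κp + i) z := by
  induction ν with
  | zero =>
    intro z hz
    simp [hf, CC, falling, rising]
  | succ ν ih =>
    intro z hz
    have hα : ∀ i : ℕ, 1/2 ≤ (κp + (i:ℂ)).re := by
      intro i
      have : (0:ℝ) ≤ i := by positivity
      simp; linarith
    have hα1 : ∀ i : ℕ, 1/2 ≤ (κp + (i:ℂ) + 1).re := by
      intro i
      have := hα i
      rw [Complex.add_re, Complex.one_re]; linarith
    rw [Function.iterate_succ_apply', XmOp_congr ih z hz]
    have r1 := RadDer.sum (p := p) (q := q) (Finset.range (ν+1)) (fun i _ =>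
      RadDer.cmul (CC κp κm lam μ ν i) (RadDer.TT h₁ i ((μ:ℤ) - ν + i) (hα i)))
    have r2 := RadDer.sum (p := p) (q := q) (Finset.range (ν+1)) (fun i _ =>
      RadDer.cmul (CC κp κm lam μ ν i)
        (RadDer.add (RadDer.cmul ((((μ:ℤ) - ν + i : ℤ)) : ℂ) (RadDer.TT h₁ i ((μ:ℤ) - ν + i - 1) (hα i)))
          (RadDer.cmul (-(1/(κp + (i:ℂ)))) (RadDer.TT h₁ (i+1) ((μ:ℤ) - ν + i) (hα1 i)))))
    rw [XmOp_rad h₂ hhom₂ hharm₂ r1 r2 z hz, ← hκm]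
    congr 1
    rw [← key_sum κp κm lam μ ν hκ, Finset.mul_sum, Finset.mul_sum, Finset.mul_sum,
      ← Finset.sum_add_distrib, ← Finset.sum_add_distrib]
    refine Finset.sum_congr rfl fun i _ => ?_
    have := D_TT h₁ i ((μ:ℤ) - ν + i) κm (hα i) z hz
    have t1 : (μ:ℤ) - ((ν+1 : ℕ):ℤ) + i = (μ:ℤ) - ν + i - 1 := by push_cast; ring
    have t2 : (μ:ℤ) - ((ν+1 : ℕ):ℤ) + ((i+1:ℕ):ℤ) = (μ:ℤ) - ν + i := by push_cast; ring
    have t3 : κp + ((i+1:ℕ):ℂ) = κp + i + 1 := by push_cast; ring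
    rw [t1, t2, t3]
    have t4 : -lam + 2*(ν:ℂ) - i = κp + i - 2 * (((μ:ℤ) - ν + i : ℤ) : ℂ) - κm := by
      rw [hlam]; push_cast; ring
    have t5 : (μ:ℂ) - ν + i = (((μ:ℤ) - ν + i : ℤ) : ℂ) := by push_cast; ring
    rw [t4, t5, ← this]
    ring

theorem stmt_17 (p q k l : ℕ) (hp : 1 ≤ p) (hq : 1 ≤ q)
    (h₁ : MvPolynomial (Fin p) ℝ) (h₂ : MvPolynomial (Fin q) ℝ)
    (hhom₁ : h₁.IsHomogeneous k) (hhom₂ : h₂.IsHomogeneous l)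
    (hharm₁ : ∑ i : Fin p, MvPolynomial.pderiv i (MvPolynomial.pderiv i h₁) = 0)
    (hharm₂ : ∑ j : Fin q, MvPolynomial.pderiv j (MvPolynomial.pderiv j h₂) = 0)
    (κp κm : ℂ) (hκp : κp = (k : ℂ) + (p : ℂ) / 2) (hκm : κm = (l : ℂ) + (q : ℂ) / 2)
    (μ : ℕ) (lam : ℂ) (hlam : lam = -κp + κm + 2 * (μ : ℂ))
    (E₁ E₂ : Pt p q → ℂ)
    (hE₁ : E₁ = fun z => ((MvPolynomial.eval z.1 h₁ : ℝ) : ℂ))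
    (hE₂ : E₂ = fun z => ((MvPolynomial.eval z.2 h₂ : ℝ) : ℂ))
    (f : Pt p q → ℂ)
    (hf : f = fun z => E₁ z * E₂ z * ((rhoy p q z : ℝ) : ℂ) ^ (μ : ℤ) * psiF p q κp z) :
    ∀ (ν : ℕ) (z : Pt p q), z.1 ≠ 0 → z.2 ≠ 0 →
      (XmOp p q)^[ν] f z =
        E₁ z * E₂ z * ∑ i ∈ Finset.range (ν + 1),
          (ν.choose i : ℂ) *
            (falling (-lam + (ν : ℂ) - 1) i * falling (μ : ℂ) (ν - i) *
                falling (κm + (μ : ℂ) - 1) (ν - i) / rising κp i) *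
            ((rhox p q z : ℝ) : ℂ) ^ (i : ℤ) *
            ((rhoy p q z : ℝ) : ℂ) ^ ((μ : ℤ) - (ν : ℤ) + (i : ℤ)) *
            psiF p q (κp + (i : ℂ)) z := by
  intro ν z _ hz
  subst hE₁ hE₂
  have hκ : 1/2 ≤ κp.re := by
    have h1 : (1:ℝ) ≤ p := by exact_mod_cast hp
    have h2 : (0:ℝ) ≤ k := by positivity
    have : κp.re = k + p/2 := by
      rw [hκp]; simp
    rw [this]; linarith
  rw [main_aux h₁ h₂ hhom₂ hharm₂ κp κm hκ hκm μ lam hlam f ?_ ν z hz]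
  · simp only [Finset.mul_sum]
    refine Finset.sum_congr rfl fun i _ => ?_
    simp only [CC, TT, zpow_natCast]
    ring
  · intro z
    rw [hf]
    simp only [TT]
    ring
end

section
/- Let p ≥ q ≥ 3 be integers with p ≡ q (mod 2) and let m ∈ ℕ. Then there exists a polynomial P with rational coefficients of degree exactly p+q−4 and leading coefficient 4(m+1)/((p−2)!·(q−2)!) such that for every n ∈ ℕ, P(n) = Σ_{j=0}^{m} ( 4·(n+j+p/2−1)·(n+m−j+p/2−1) / ((p−2)!·(q−2)!) ) · (n+j+1)_{p−3} · (n+m−j+(p−q)/2+1)_{q−3}, where (β)_k = β(β+1)⋯(β+k−1) is the rising factorial. (This sum is Σ_{j=0}^m dim ℋ^{n+j}(ℝ^p)·dim ℋ^{n+m−j+(p−q)/2}(ℝ^q), the dimension of the n-th graded piece used to compute the Gelfand–Kirillov dimension p+q−3 and Bernstein degree 4(m+1)(p+q−4)!/((p−2)!(q−2)!) of the module M_m^±.) -/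
/-- Rising factorial `(β)ₖ = β(β+1)⋯(β+k−1)` for a rational number `β`. -/
noncomputable def risingQ (β : ℚ) : ℕ → ℚ
  | 0 => 1
  | n + 1 => risingQ β n * (β + n)

open Polynomial in
theorem risingQ_poly (c : ℚ) (k : ℕ) : ∃ R : Polynomial ℚ, R.Monic ∧ R.natDegree = k ∧
    ∀ x : ℚ, R.eval x = risingQ (x + c) k := by
  induction k with
  | zero => exact ⟨1, monic_one, natDegree_one, fun x => by simp [risingQ]⟩
  | succ k ih =>
    obtain ⟨R, h1, h2, h3⟩ := ih
    refine ⟨R * (X + C (c + k)), h1.mul (monic_X_add_C _), ?_, fun x => ?_⟩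
    · rw [h1.natDegree_mul (monic_X_add_C _), h2, natDegree_X_add_C]
    · simp [risingQ, h3, add_assoc]

open Polynomial in
theorem term_poly (a b c e : ℚ) (k l : ℕ) : ∃ R : Polynomial ℚ, R.Monic ∧
    R.natDegree = k + l + 2 ∧
    ∀ x : ℚ, R.eval x = (x + a) * (x + b) * risingQ (x + c) k * risingQ (x + e) l := by
  obtain ⟨R, h1, h2, h3⟩ := risingQ_poly c k
  obtain ⟨S, g1, g2, g3⟩ := risingQ_poly e l
  have hm := (monic_X_add_C a).mul (monic_X_add_C b)
  refine ⟨(X + C a) * (X + C b) * R * S, (hm.mul h1).mul g1, ?_, fun x => ?_⟩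
  · rw [(hm.mul h1).natDegree_mul g1, hm.natDegree_mul h1,
      (monic_X_add_C a).natDegree_mul (monic_X_add_C b), h2, g2, natDegree_X_add_C,
      natDegree_X_add_C]
    omega
  · simp [h3, g3]

theorem stmt_18 (p q m : ℕ) (hq3 : 3 ≤ q) (hqp : q ≤ p) (hpar : p % 2 = q % 2) :
    ∃ P : Polynomial ℚ,
      P.natDegree = p + q - 4 ∧
      P.leadingCoeff = 4 * (m + 1) / (((p - 2).factorial : ℚ) * ((q - 2).factorial : ℚ)) ∧
      ∀ n : ℕ, P.eval (n : ℚ) =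
        ∑ j ∈ Finset.range (m + 1),
          (4 * ((n : ℚ) + j + (p : ℚ) / 2 - 1) * ((n : ℚ) + m - j + (p : ℚ) / 2 - 1) /
              (((p - 2).factorial : ℚ) * ((q - 2).factorial : ℚ))) *
            risingQ ((n : ℚ) + j + 1) (p - 3) *
            risingQ ((n : ℚ) + m - j + ((p : ℚ) - q) / 2 + 1) (q - 3) := by
  have key : ∀ j : ℕ, _ := fun j => term_poly ((j : ℚ) + (p : ℚ) / 2 - 1)
    ((m : ℚ) - j + (p : ℚ) / 2 - 1) ((j : ℚ) + 1) ((m : ℚ) - j + ((p : ℚ) - q) / 2 + 1)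
    (p - 3) (q - 3)
  choose f hf1 hf2 hf3 using key
  have hd : p - 3 + (q - 3) + 2 = p + q - 4 := by omega
  rw [hd] at hf2
  set D : ℚ := ((p - 2).factorial : ℚ) * ((q - 2).factorial : ℚ) with hD
  have hD0 : D ≠ 0 := by positivity
  have hm0 : (4 * ((m : ℚ) + 1) / D) ≠ 0 :=
    div_ne_zero (by positivity) hD0
  let P : Polynomial ℚ := Polynomial.C (4 / D) * ∑ j ∈ Finset.range (m + 1), f j
  have hc : P.coeff (p + q - 4) = 4 * ((m : ℚ) + 1) / D := by
    have h1 : ∀ j, (f j).coeff (p + q - 4) = 1 := fun j => by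
      have := (hf1 j).coeff_natDegree
      rwa [hf2] at this
    simp only [P, Polynomial.coeff_C_mul, Polynomial.finsetSum_coeff, h1]
    simp
    ring
  have hle : P.natDegree ≤ p + q - 4 :=
    (Polynomial.natDegree_C_mul_le _ _).trans
      (Polynomial.natDegree_sum_le_of_forall_le _ _ fun j _ => (hf2 j).le)
  have hdeg : P.natDegree = p + q - 4 :=
    Polynomial.natDegree_eq_of_le_of_coeff_ne_zero hle (by rw [hc]; exact hm0)
  refine ⟨P, hdeg, ?_, fun n => ?_⟩
  · rw [Polynomial.leadingCoeff, hdeg, hc]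
  · simp only [P, Polynomial.eval_mul, Polynomial.eval_C, Polynomial.eval_finsetSum, hf3,
      Finset.mul_sum]
    refine Finset.sum_congr rfl fun j _ => ?_
    rw [show (n : ℚ) + ((j : ℚ) + 1) = n + j + 1 by ring,
      show (n : ℚ) + ((m : ℚ) - j + ((p : ℚ) - q) / 2 + 1)
        = n + m - j + ((p : ℚ) - q) / 2 + 1 by ring]
    ring
end
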